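/- Let V be a variety over a finite language with 0⃗ & 1⃗ having the Determining Property. Then the class V_DI of directly indecomposable members of V is axiomatizable by a set of first-order sentences. -/

import Mathlib

open FirstOrder Language

universe u v w

namespace Paper

variable {L : FirstOrder.Language.{v, w}}

/-- The direct product of two `L`-structures, with pointwise operations. -/
instance prodStructure (A : Type*) (B : Type*) [L.Structure A] [L.Structure B] :
    L.Structure (A × B) where
  funMap f x := (Structure.funMap f fun i => (x i).1, Structure.funMap f fun i => (x i).2)
  RelMap r x := Structure.RelMap r (fun i => (x i).1) ∧ Structure.RelMap r fun i => (x i).2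

/-- The interpretation of a closed term in an algebra. -/
def interp (A : Type u) [L.Structure A] (t : L.Term Empty) : A := t.realize Empty.elim

/-- A congruence of an `L`-structure: an equivalence relation compatible with all
basic operations. -/
structure Congruence (L : FirstOrder.Language.{v, w}) (A : Type u) [L.Structure A] where
  rel : A → A → Prop
  refl : ∀ a, rel a a
  symm : ∀ {a b}, rel a b → rel b a
  trans : ∀ {a b c}, rel a b → rel b c → rel a c
  compat : ∀ {n} (f : L.Functions n) (x y : Fin n → A),
    (∀ i, rel (x i) (y i)) → rel (Structure.funMap f x) (Structure.funMap f y)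

variable {A : Type u} [L.Structure A]

/-- `θ ⋄ θ* = Δ` : `θ ∩ θ* = Δ` and `θ ∘ θ* = ∇`. -/
def Complementary (θ θ' : Congruence L A) : Prop :=
  (∀ a b : A, θ.rel a b → θ'.rel a b → a = b) ∧ ∀ a b : A, ∃ c : A, θ.rel a c ∧ θ'.rel c b

/-- A factor congruence: the kernel of a projection onto a direct factor,
equivalently a congruence possessing a complementary factor congruence. -/
def IsFactorCongruence (θ : Congruence L A) : Prop := ∃ θ' : Congruence L A, Complementary θ θ'

/-- The meet of two congruences. -/
def Congruence.inf (θ φ : Congruence L A) : Congruence L A where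
  rel a b := θ.rel a b ∧ φ.rel a b
  refl a := ⟨θ.refl a, φ.refl a⟩
  symm h := ⟨θ.symm h.1, φ.symm h.2⟩
  trans h h' := ⟨θ.trans h.1 h'.1, φ.trans h.2 h'.2⟩
  compat f x y h := ⟨θ.compat f x y fun i => (h i).1, φ.compat f x y fun i => (h i).2⟩

/-- The order on congruences. -/
def Congruence.le (θ φ : Congruence L A) : Prop := ∀ a b : A, θ.rel a b → φ.rel a b

/-- The join of two congruences in the congruence lattice. -/
def Congruence.sup (θ φ : Congruence L A) : Congruence L A where
  rel a b := ∀ ψ : Congruence L A, θ.le ψ → φ.le ψ → ψ.rel a b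
  refl a ψ _ _ := ψ.refl a
  symm h ψ h1 h2 := ψ.symm (h ψ h1 h2)
  trans h h' ψ h1 h2 := ψ.trans (h ψ h1 h2) (h' ψ h1 h2)
  compat f x y h ψ h1 h2 := ψ.compat f x y fun i => h i ψ h1 h2

/-- A theory is equational when each axiom is a universally quantified equation. -/
def IsEquational (T : L.Theory) : Prop :=
  ∀ φ ∈ T, ∃ (n : ℕ) (t₁ t₂ : L.Term (Empty ⊕ Fin n)), φ = (t₁.bdEqual t₂).alls

/-- `Mod(T)` is a variety with `0⃗` & `1⃗`, witnessed by closed terms `z`, `o`. -/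
def HasZeroOne (T : L.Theory) {l : ℕ} (z o : Fin l → L.Term Empty) : Prop :=
  ∀ (A : Type u) [L.Structure A], A ⊨ T → Nonempty A →
    (∀ i, interp A (z i) = interp A (o i)) → ∀ x y : A, x = y

variable {l : ℕ} (z o : Fin l → L.Term Empty)

/-- `0⃗ θ e⃗ θ* 1⃗`. -/
def Between (θ θ' : Congruence L A) (e : Fin l → A) : Prop :=
  (∀ i, θ.rel (interp A (z i)) (e i)) ∧ ∀ i, θ'.rel (e i) (interp A (o i))

/-- `e⃗` is a central element of `A`. -/
def IsCentral (e : Fin l → A) : Prop :=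
  ∃ (A₁ : Type u) (A₂ : Type u) (_ : L.Structure A₁) (_ : L.Structure A₂)
    (g : A ≃[L] A₁ × A₂), ∀ i, g (e i) = (interp A₁ (z i), interp A₂ (o i))

/-- `e⃗` and `f⃗` are complementary central elements of `A`. -/
def AreComplementaryCentral (e f : Fin l → A) : Prop :=
  ∃ (A₁ : Type u) (A₂ : Type u) (_ : L.Structure A₁) (_ : L.Structure A₂)
    (g : A ≃[L] A₁ × A₂),
      (∀ i, g (e i) = (interp A₁ (z i), interp A₂ (o i))) ∧
      (∀ i, g (f i) = (interp A₁ (o i), interp A₂ (z i)))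

variable (T : L.Theory)

/-- The Determining Property. -/
def HasDeterminingProperty : Prop :=
  ∀ (A : Type u) [L.Structure A], A ⊨ T → Nonempty A →
    (∀ θ θ' : Congruence L A, Complementary θ θ' → ∃! e : Fin l → A, Between z o θ θ' e) ∧
    (∀ (θ θ' : Congruence L A) (e : Fin l → A), Complementary θ θ' → Between z o θ θ' e →
      IsCentral z o e) ∧
    (∀ e : Fin l → A, IsCentral z o e →
      ∃! p : Congruence L A × Congruence L A, Complementary p.1 p.2 ∧ Between z o p.1 p.2 e)

/-- The Weak Determining Property. -/
def HasWeakDeterminingProperty : Prop :=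
  ∀ (A : Type u) [L.Structure A], A ⊨ T → Nonempty A →
    (∀ θ θ' : Congruence L A, Complementary θ θ' →
      ∃! p : (Fin l → A) × (Fin l → A), Between z o θ θ' p.1 ∧ Between o z θ θ' p.2) ∧
    (∀ (θ θ' : Congruence L A) (e f : Fin l → A), Complementary θ θ' →
      Between z o θ θ' e → Between o z θ θ' f → AreComplementaryCentral z o e f) ∧
    (∀ e f : Fin l → A, AreComplementaryCentral z o e f →
      ∃! p : Congruence L A × Congruence L A,
        Complementary p.1 p.2 ∧ Between z o p.1 p.2 e ∧ Between o z p.1 p.2 f)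

/-- Definable Factor Congruences. -/
def HasDFC : Prop :=
  ∃ Φ : L.Formula (Fin 2 ⊕ Fin l),
    ∀ (A : Type u) (B : Type u) [L.Structure A] [L.Structure B],
      A ⊨ T → B ⊨ T → Nonempty A → Nonempty B →
        ∀ (a c : A) (b d : B),
          Φ.Realize (Sum.elim (![((a, b) : A × B), (c, d)])
            fun i => ((interp A (z i), interp B (o i)) : A × B)) ↔ a = c

/-- Definability with both `[0⃗,1⃗]` and `[1⃗,0⃗]` as parameters. -/
def HasDFC' : Prop :=
  ∃ Φ : L.Formula (Fin 2 ⊕ (Fin l ⊕ Fin l)),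
    ∀ (A : Type u) (B : Type u) [L.Structure A] [L.Structure B],
      A ⊨ T → B ⊨ T → Nonempty A → Nonempty B →
        ∀ (a c : A) (b d : B),
          Φ.Realize (Sum.elim (![((a, b) : A × B), (c, d)])
            (Sum.elim (fun i => ((interp A (z i), interp B (o i)) : A × B))
              fun i => ((interp A (o i), interp B (z i)) : A × B))) ↔ a = c

/-- Boolean Factor Congruences. -/
def HasBFC : Prop :=
  ∀ (A : Type u) [L.Structure A], A ⊨ T → Nonempty A →
    (∀ θ φ : Congruence L A, IsFactorCongruence θ → IsFactorCongruence φ →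
      IsFactorCongruence (θ.inf φ) ∧ IsFactorCongruence (θ.sup φ)) ∧
    (∀ θ φ ψ : Congruence L A, IsFactorCongruence θ → IsFactorCongruence φ →
      IsFactorCongruence ψ →
        (θ.inf (φ.sup ψ)).rel = ((θ.inf φ).sup (θ.inf ψ)).rel)

end Paper

namespace Paper

/-- An algebra is directly indecomposable if it is nontrivial and not isomorphic to
a direct product of two nontrivial algebras. -/
def DirectlyIndecomposable (L : FirstOrder.Language.{v, w}) (A : Type u)
    [L.Structure A] : Prop :=
  Nontrivial A ∧
    ¬∃ (B : Type u) (C : Type u) (_ : L.Structure B) (_ : L.Structure C),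
      Nontrivial B ∧ Nontrivial C ∧ Nonempty (A ≃[L] B × C)

end Paper

/-!
By the Determining Property, a central element `e⃗` of `A` belongs to a unique pair `(θ, θ*)` of
complementary factor congruences with `0⃗ θ e⃗ θ* 1⃗`. Hence an isomorphism between members of `V`
carries the pair of `e⃗` to the pair of its image: the pair is implicitly definable from `e⃗`, so by
Beth's theorem it is explicitly definable. For a finite language, being such a pair is a first-order
property, so the central elements are the solutions of a formula `κ`. A nontrivial `A ∈ V` is
directly indecomposable exactly when `0⃗` and `1⃗` are its only central elements, and this is now
expressed by a first-order sentence.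

Beth's theorem is reduced to Craig interpolation. If two formulas cannot be separated by a formula
of the common language, then Henkin conditions for both languages can be met by successively
stronger inseparable pairs. A generic ideal of such pairs yields two models, each consisting of the
values of the variables, which agree on the formulas of the common language and so have isomorphic
reducts.
-/

universe t v₁ w₁ v₂ w₂

namespace Paper

section Entailment

variable {L : FirstOrder.Language.{v, w}} {α : Type t} {T : L.Theory} {φ ψ : L.Formula α}

theorem imp_iff_forall_realize :
    (φ ⟹[T] ψ) ↔ ∀ (M : Theory.ModelType.{v, w, max v w t} T) (x : α → M),
      φ.Realize x → ψ.Realize x := by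
  simp only [Theory.Imp, Theory.models_formula_iff, Formula.realize_imp]

theorem realize_of_imp (h : φ ⟹[T] ψ) {M : Type*} [L.Structure M] [M ⊨ T] [Nonempty M]
    {x : α → M} (hx : φ.Realize x) : ψ.Realize x :=
  h.realize_formula M hx

theorem imp_relabel_relabel {β : Type t} {ν : α → β} {r : β → α} (hr : r ∘ ν = id) :
    φ ⟹[T] (φ.relabel ν).relabel r := by
  refine imp_iff_forall_realize.2 fun M x hx => ?_
  rwa [Formula.realize_relabel, Formula.realize_relabel, Function.comp_assoc, hr,
    Function.comp_id]

/-- The sentences with constants from `α` that `φ` entails over `T`, each variable of `φ` being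
read as the constant it names. -/
def entailedTheory (T : L.Theory) (φ : L.Formula α) : L[[α]].Theory :=
  {σ | φ ⟹[T] Formula.equivSentence.symm σ}

theorem onTheory_subset_entailedTheory :
    (L.lhomWithConstants α).onTheory T ⊆ entailedTheory T φ := by
  rintro _ ⟨σ, hσ, rfl⟩
  refine imp_iff_forall_realize.2 fun M x _ => ?_
  let := constantsOn.structure x
  rw [Formula.realize_equivSentence_symm, LHom.realize_onSentence]
  exact M.is_model.realize_of_mem σ hσ

theorem isSatisfiable_entailedTheory (h : ¬ (φ ⟹[T] ⊥)) : (entailedTheory T φ).IsSatisfiable := by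
  rw [imp_iff_forall_realize] at h
  push Not at h
  obtain ⟨M, x, hx, -⟩ := h
  let := constantsOn.structure x
  have : M ⊨ entailedTheory T φ := ⟨fun σ hσ =>
    (Formula.realize_equivSentence_symm M σ x).1 (realize_of_imp hσ hx)⟩
  exact Theory.Model.isSatisfiable M

theorem exists_forall_realize_of_directed {ι : Type*} [Nonempty ι] {f : ι → L.Formula α}
    (hdir : Directed (fun φ ψ => ψ ⟹[T] φ) f) (hf : ∀ i, ¬ (f i ⟹[T] ⊥)) :
    ∃ (N : Theory.ModelType.{v, w, max v w t} T) (x : α → N), ∀ i, (f i).Realize x := by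
  have hmono : Directed (· ⊆ ·) fun i => entailedTheory T (f i) := fun i j =>
    (hdir i j).imp fun _ hk => ⟨fun _ hσ => hk.1.trans hσ, fun _ hσ => hk.2.trans hσ⟩
  obtain ⟨N⟩ := (Theory.isSatisfiable_directed_union_iff hmono).2
    fun i => isSatisfiable_entailedTheory (hf i)
  let : L.Structure N := (L.lhomWithConstants α).reduct N
  have : (L.lhomWithConstants α).IsExpansionOn N := LHom.isExpansionOn_reduct _ _
  have hN (i : ι) : N ⊨ entailedTheory T (f i) := 
    N.is_model.mono (Set.subset_iUnion (fun i => entailedTheory T (f i)) i)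
  have : N ⊨ T := (LHom.onTheory_model (L.lhomWithConstants α) T).1
    ((hN (Classical.arbitrary ι)).mono onTheory_subset_entailedTheory)
  refine ⟨Theory.ModelType.of T N, fun a => (L.con a : N), fun i => ?_⟩
  refine (Formula.realize_equivSentence N (f i)).1 ((hN i).realize_of_mem _ ?_)
  simpa only [entailedTheory, Set.mem_ofPred_eq, Equiv.symm_apply_apply] using Theory.Imp.refl (f i)

end Entailment

section CanonicalModel

variable {L : FirstOrder.Language.{v, w}} {α : Type t} {T : L.Theory}

/-- A Henkin condition on `φ`: modulo `T`, either `φ` refutes `∃ y, τ`, or it names a witness of it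
among the variables `α`. -/
def DecidesExists (T : L.Theory) (φ : L.Formula α) (τ : L.Formula (α ⊕ Fin 1)) : Prop :=
  (φ ⟹[T] (τ.iExs (Fin 1)).not) ∨ ∃ a, φ ⟹[T] τ.relabel (Sum.elim id fun _ => a)

theorem DecidesExists.realize {φ : L.Formula α} {τ : L.Formula (α ⊕ Fin 1)}
    (h : DecidesExists T φ τ) {M : Type*} [L.Structure M] [M ⊨ T] [Nonempty M] {x : α → M}
    (hx : φ.Realize x) {y : Fin 1 → M} (hy : τ.Realize (Sum.elim x y)) :
    ∃ a, τ.Realize (Sum.elim x fun _ => x a) := by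
  rcases h with h | ⟨a, h⟩
  · exact absurd (Formula.realize_iExs.2 ⟨y, hy⟩) (Formula.realize_not.1 (realize_of_imp h hx))
  · refine ⟨a, ?_⟩
    have := realize_of_imp h hx
    rwa [Formula.realize_relabel, Sum.comp_elim, Function.comp_id] at this

theorem meetsDefinable_range {M : Type*} [L.Structure M] {x : α → M}
    (h : ∀ (τ : L.Formula (α ⊕ Fin 1)) (y : Fin 1 → M), τ.Realize (Sum.elim x y) →
      ∃ a, τ.Realize (Sum.elim x fun _ => x a)) :
    L.MeetsDefinable (Set.range x) := by
  rintro D ⟨c, hc⟩ hD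
  obtain ⟨φ, hφ⟩ := Set.definable_iff_exists_formula_sum.1 hD
  choose ν hν using fun b : Set.range x => b.2
  have hφD (y : Fin 1 → M) : (φ.relabel (Sum.map ν id)).Realize (Sum.elim x y) ↔ y 0 ∈ D := by
    have hy := Set.ext_iff.1 hφ y
    rw [Formula.realize_relabel, Sum.elim_comp_map, Function.comp_id,
      show x ∘ ν = (↑) from funext hν]
    exact hy.symm
  obtain ⟨a, ha⟩ := h _ (fun _ => c) ((hφD _).2 hc)
  exact ⟨x a, (hφD _).1 ha, a, rfl⟩

/-- The model is found as an elementary substructure of an arbitrary one: the Henkin conditions are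
the Tarski–Vaught test for the set of values of the variables. -/
theorem exists_surjective_forall_realize [Small.{u} α] {ι : Type*} [Nonempty ι]
    {f : ι → L.Formula α} (hdir : Directed (fun φ ψ => ψ ⟹[T] φ) f)
    (hf : ∀ i, ¬ (f i ⟹[T] ⊥)) (hdec : ∀ τ, ∃ i, DecidesExists T (f i) τ) :
    ∃ (M : Type u) (_ : L.Structure M) (x : α → M),
      M ⊨ T ∧ Function.Surjective x ∧ ∀ i, (f i).Realize x := by
  obtain ⟨N, x, hx⟩ := exists_forall_realize_of_directed hdir hf
  have hmeets : L.MeetsDefinable (Set.range x) := meetsDefinable_range fun τ y hy =>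
    let ⟨i, hi⟩ := hdec τ
    hi.realize (hx i) hy
  let S := hmeets.toElementarySubstructure
  have hS : (S : Set N) = Set.range x := hmeets.closure_eq_self
  let x' (a : α) : S := ⟨x a, hS.ge (Set.mem_range_self a)⟩
  have hx' : Function.Surjective x' := fun s =>
    (hS.le s.2).imp fun a ha => Subtype.ext ha
  have : Small.{u} S := small_of_surjective hx'
  let e : S ≃ Shrink.{u} S := equivShrink S
  let := e.inducedStructure (L := L)
  have hST : S ⊨ T := inferInstance
  refine ⟨Shrink.{u} S, inferInstance, e ∘ x', StrongHomClass.theory_model e.inducedStructureEquiv,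
    e.surjective.comp hx', fun i => ?_⟩
  refine (StrongHomClass.realize_formula (e.inducedStructureEquiv (L := L)) (f i)).2 ?_
  exact (S.subtype.map_formula (f i) x').1 (hx i)

end CanonicalModel

section Isomorphism

variable {L : FirstOrder.Language.{v, w}} {α : Type t} {M N : Type*} [L.Structure M] [L.Structure N]

theorem exists_equiv_of_realize_iff {x : α → M} {y : α → N} (hx : Function.Surjective x)
    (hy : Function.Surjective y) (h : ∀ φ : L.Formula α, φ.Realize x ↔ φ.Realize y) :
    ∃ e : M ≃[L] N, e ∘ x = y := by
  have hterm (s r : L.Term α) : s.realize x = r.realize x ↔ s.realize y = r.realize y := by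
    simpa only [Formula.realize_equal] using h (s.equal r)
  choose ν hν using hx
  have he (a : α) : y (ν (x a)) = y a := (hterm (.var _) (.var _)).1 (hν (x a))
  have hbij : Function.Bijective (y ∘ ν) := by
    refine ⟨fun m n hmn => ?_, fun n => (hy n).imp' x fun a ha => (he a).trans ha⟩
    simpa only [Term.realize_var, hν] using (hterm (.var (ν m)) (.var (ν n))).2 hmn
  refine ⟨{ Equiv.ofBijective (y ∘ ν) hbij with
    map_fun' := fun f m => ?_, map_rel' := fun R m => ?_ }, funext he⟩
  · refine (hterm (.var _) (.func f (.var ∘ ν ∘ m))).1 ?_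
    simp only [Term.realize_var, Term.realize_func, Function.comp_apply, hν]
  · have := h (R.formula (.var ∘ ν ∘ m))
    simp only [Formula.realize_rel, Term.realize_var, Function.comp_apply, hν] at this
    exact this.symm

end Isomorphism

section Variables

variable {L : FirstOrder.Language.{v, w}} {α : Type t} [DecidableEq α]
  {M : Type*} [L.Structure M]

theorem realize_update_iff {φ : L.Formula α} {a : α} (ha : a ∉ φ.freeVarFinset) (x : α → M)
    (c : M) : φ.Realize (Function.update x a c) ↔ φ.Realize x := by
  have hx (b : φ.freeVarFinset) : x b = Function.update x a c b :=
    (Function.update_of_ne (ne_of_mem_of_not_mem b.2 ha) c x).symm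
  have h₁ := BoundedFormula.realize_restrictFreeVar (φ := φ) (f := id) (v := fun b => x b)
    (xs := default) _ hx
  have h₂ := BoundedFormula.realize_restrictFreeVar (φ := φ) (f := id) (v := fun b => x b)
    (xs := default) x fun _ => rfl
  exact h₁.symm.trans h₂

/-- The formula `∃ a, φ`, binding the variable `a` of `φ`. -/
noncomputable def exVar (a : α) (φ : L.Formula α) : L.Formula α :=
  (φ.relabel fun b => if b = a then Sum.inr 0 else Sum.inl b).iExs (Fin 1)

theorem realize_exVar {a : α} {φ : L.Formula α} {x : α → M} :
    (exVar a φ).Realize x ↔ ∃ c, φ.Realize (Function.update x a c) := by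
  have hx (y : Fin 1 → M) : (Sum.elim x y ∘ fun b => if b = a then Sum.inr 0 else Sum.inl b) =
      Function.update x a (y 0) := by
    funext b
    by_cases h : b = a <;> simp [h]
  simp only [exVar, Formula.realize_iExs, Formula.realize_relabel]
  constructor
  · rintro ⟨y, hy⟩
    exact ⟨y 0, hx y ▸ hy⟩
  · rintro ⟨c, hc⟩
    exact ⟨fun _ => c, (hx _).symm ▸ hc⟩

end Variables

section Separation

variable {L : FirstOrder.Language.{v, w}} {L₁ : FirstOrder.Language.{v₁, w₁}}
  {L₂ : FirstOrder.Language.{v₂, w₂}} {g₁ : L →ᴸ L₁} {g₂ : L →ᴸ L₂} {T₁ : L₁.Theory}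
  {T₂ : L₂.Theory} {α β : Type t} {φ φ' : L₁.Formula α} {ψ ψ' : L₂.Formula α}

theorem realize_onFormula_relabel {M : Type*} [L₁.Structure M] {ν : α → β} {χ : L.Formula α}
    {x : β → M} :
    (g₁.onFormula (χ.relabel ν)).Realize x ↔ (g₁.onFormula χ).Realize (x ∘ ν) := by
  let := g₁.reduct M
  have := g₁.isExpansionOn_reduct M
  simp only [LHom.realize_onFormula, Formula.realize_relabel]

theorem realize_onFormula_exVar [DecidableEq α] {M : Type*} [L₁.Structure M] {a : α}
    {χ : L.Formula α} {x : α → M} :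
    (g₁.onFormula (exVar a χ)).Realize x ↔
      ∃ c, (g₁.onFormula χ).Realize (Function.update x a c) := by
  let := g₁.reduct M
  have := g₁.isExpansionOn_reduct M
  simp only [LHom.realize_onFormula, realize_exVar]

/-- A formula of the common sublanguage `L` follows from `φ` over `T₁` and is refuted by `ψ` over
`T₂`; such a formula is a Craig interpolant. -/
def Separable (g₁ : L →ᴸ L₁) (g₂ : L →ᴸ L₂) (T₁ : L₁.Theory) (T₂ : L₂.Theory)
    (φ : L₁.Formula α) (ψ : L₂.Formula α) : Prop :=
  ∃ χ : L.Formula α, (φ ⟹[T₁] g₁.onFormula χ) ∧ (ψ ⟹[T₂] (g₂.onFormula χ).not)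

namespace Separable

theorem symm (h : Separable g₁ g₂ T₁ T₂ φ ψ) : Separable g₂ g₁ T₂ T₁ ψ φ := by
  obtain ⟨χ, hφ, hψ⟩ := h
  exact ⟨χ.not, hψ, hφ.trans (Formula.iff_not_not _).mp⟩

theorem mono (h : Separable g₁ g₂ T₁ T₂ φ ψ) (hφ : φ' ⟹[T₁] φ) (hψ : ψ' ⟹[T₂] ψ) :
    Separable g₁ g₂ T₁ T₂ φ' ψ' :=
  h.imp fun _ hχ => ⟨hφ.trans hχ.1, hψ.trans hχ.2⟩

theorem of_imp_bot (h : φ ⟹[T₁] ⊥) : Separable g₁ g₂ T₁ T₂ φ ψ :=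
  ⟨⊥, h, Theory.imp_top _⟩

theorem sup_left (h : Separable g₁ g₂ T₁ T₂ φ ψ) (h' : Separable g₁ g₂ T₁ T₂ φ' ψ) :
    Separable g₁ g₂ T₁ T₂ (φ ⊔ φ') ψ := by
  obtain ⟨χ, hφ, hψ⟩ := h
  obtain ⟨χ', hφ', hψ'⟩ := h'
  refine ⟨χ ⊔ χ', Theory.sup_imp (hφ.trans (Theory.imp_sup_left _ _))
    (hφ'.trans (Theory.imp_sup_right _ _)), imp_iff_forall_realize.2 fun M x hx => ?_⟩
  exact fun hsup => (Formula.realize_sup (φ := g₂.onFormula χ)).1 hsup |>.elim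
    (realize_of_imp hψ hx) (realize_of_imp hψ' hx)

theorem exVar_left [DecidableEq α] {a : α} (h : Separable g₁ g₂ T₁ T₂ φ ψ)
    (ha : a ∉ ψ.freeVarFinset) : Separable g₁ g₂ T₁ T₂ (exVar a φ) ψ := by
  obtain ⟨χ, hφ, hψ⟩ := h
  refine ⟨exVar a χ, imp_iff_forall_realize.2 fun M x hx => ?_,
    imp_iff_forall_realize.2 fun M x hx => ?_⟩
  · exact realize_onFormula_exVar.2 ((realize_exVar.1 hx).imp fun c hc => realize_of_imp hφ hc)
  · rw [Formula.realize_not, realize_onFormula_exVar]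
    rintro ⟨c, hc⟩
    exact realize_of_imp hψ ((realize_update_iff ha x c).2 hx) hc

theorem relabel (h : Separable g₁ g₂ T₁ T₂ φ ψ) (ν : α → β) :
    Separable g₁ g₂ T₁ T₂ (φ.relabel ν) (ψ.relabel ν) := by
  obtain ⟨χ, hφ, hψ⟩ := h
  refine ⟨χ.relabel ν, imp_iff_forall_realize.2 fun M x hx => ?_,
    imp_iff_forall_realize.2 fun M x hx => ?_⟩
  · exact realize_onFormula_relabel.2 (realize_of_imp hφ (Formula.realize_relabel.1 hx))
  · rw [Formula.realize_not, realize_onFormula_relabel]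
    exact realize_of_imp hψ (Formula.realize_relabel.1 hx)

end Separable

/-- The Henkin step: a fresh variable may be used as a witness without creating a separation. -/
theorem exists_decidesExists_of_not_separable [Infinite α]
    (h : ¬ Separable g₁ g₂ T₁ T₂ φ ψ) (τ : L₁.Formula (α ⊕ Fin 1)) :
    ∃ φ', ¬ Separable g₁ g₂ T₁ T₂ φ' ψ ∧ (φ' ⟹[T₁] φ) ∧ DecidesExists T₁ φ' τ := by
  classical
  obtain ⟨a, ha⟩ := Infinite.exists_notMem_finset
    (φ.freeVarFinset ∪ ψ.freeVarFinset ∪ τ.freeVarFinset.toLeft)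
  simp only [Finset.mem_union, not_or, Finset.mem_toLeft] at ha
  obtain ⟨⟨haφ, haψ⟩, haτ⟩ := ha
  let τa : L₁.Formula α := τ.relabel (Sum.elim id fun _ => a)
  by_contra! hcon
  have hrefute : Separable g₁ g₂ T₁ T₂ (φ ⊓ (τ.iExs (Fin 1)).not) ψ := by
    by_contra hsep
    exact hcon _ hsep (Theory.inf_imp_left _ _) (.inl (Theory.inf_imp_right _ _))
  have hwitness : Separable g₁ g₂ T₁ T₂ (φ ⊓ τa) ψ := by
    by_contra hsep
    exact hcon _ hsep (Theory.inf_imp_left _ _) (.inr ⟨a, Theory.inf_imp_right _ _⟩)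
  refine h ((hrefute.sup_left (hwitness.exVar_left haψ)).mono
    (imp_iff_forall_realize.2 fun M x hx => ?_) (Theory.Imp.refl ψ))
  rw [Formula.realize_sup, Formula.realize_inf, Formula.realize_not, Formula.realize_iExs,
    realize_exVar]
  by_cases hτ : ∃ y : Fin 1 → M, τ.Realize (Sum.elim x y)
  · obtain ⟨y, hy⟩ := hτ
    refine .inr ⟨y 0, Formula.realize_inf.2 ⟨(realize_update_iff haφ x _).2 hx, ?_⟩⟩
    have hval : Function.update x a (y 0) ∘ Sum.elim id (fun _ : Fin 1 => a) =
        Function.update (Sum.elim x y) (Sum.inl a) (y 0) := by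
      rw [Sum.comp_elim, Function.comp_id, Sum.update_elim_inl]
      congr 1
      funext i
      rw [Fin.fin_one_eq_zero i]
      exact Function.update_self a (y 0) x
    rw [Formula.realize_relabel, hval]
    exact (realize_update_iff haτ _ _).2 hy
  · exact .inl ⟨hx, hτ⟩

end Separation

section Interpolation

variable {L : FirstOrder.Language.{v, w}} {L₁ : FirstOrder.Language.{v₁, w₁}}
  {L₂ : FirstOrder.Language.{v₂, w₂}} {α : Type t}

theorem DecidesExists.imp_or_imp_not {T : L.Theory} {φ χ : L.Formula α}
    (h : DecidesExists T φ (χ.relabel Sum.inl)) : (φ ⟹[T] χ) ∨ (φ ⟹[T] χ.not) := by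
  rcases h with h | ⟨a, h⟩
  · refine .inr (imp_iff_forall_realize.2 fun M x hx hχ => ?_)
    refine Formula.realize_not.1 (realize_of_imp h hx)
      (Formula.realize_iExs.2 ⟨fun _ => Classical.arbitrary M, ?_⟩)
    rwa [Formula.realize_relabel, Sum.elim_comp_inl]
  · refine .inl (imp_iff_forall_realize.2 fun M x hx => ?_)
    have := realize_of_imp h hx
    rwa [Formula.realize_relabel, Formula.realize_relabel] at this

/-- The forcing conditions for interpolation: the inseparable pairs, ordered by entailment. -/
structure InseparablePair (g₁ : L →ᴸ L₁) (g₂ : L →ᴸ L₂) (T₁ : L₁.Theory) (T₂ : L₂.Theory)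
    (α : Type t) where
  fst : L₁.Formula α
  snd : L₂.Formula α
  not_separable : ¬ Separable g₁ g₂ T₁ T₂ fst snd

namespace InseparablePair

variable {g₁ : L →ᴸ L₁} {g₂ : L →ᴸ L₂} {T₁ : L₁.Theory} {T₂ : L₂.Theory}

instance : Preorder (InseparablePair g₁ g₂ T₁ T₂ α) where
  le p q := (q.fst ⟹[T₁] p.fst) ∧ (q.snd ⟹[T₂] p.snd)
  le_refl p := ⟨Theory.Imp.refl p.fst, Theory.Imp.refl p.snd⟩
  le_trans _ _ _ h h' := ⟨h'.1.trans h.1, h'.2.trans h.2⟩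

theorem not_fst_imp_bot (p : InseparablePair g₁ g₂ T₁ T₂ α) : ¬ (p.fst ⟹[T₁] ⊥) :=
  fun h => p.not_separable (.of_imp_bot h)

theorem not_snd_imp_bot (p : InseparablePair g₁ g₂ T₁ T₂ α) : ¬ (p.snd ⟹[T₂] ⊥) :=
  fun h => p.not_separable (Separable.of_imp_bot h).symm

variable [Infinite α]

/-- The conditions that decide a given existential formula, in the language of either side. -/
def decisive : L₁.Formula (α ⊕ Fin 1) ⊕ L₂.Formula (α ⊕ Fin 1) →
    Order.Cofinal (InseparablePair g₁ g₂ T₁ T₂ α)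
  | .inl τ =>
    { carrier := {p | DecidesExists T₁ p.fst τ}
      isCofinal := fun p => by
        obtain ⟨φ, hφ, hle, hdec⟩ := exists_decidesExists_of_not_separable p.not_separable τ
        exact ⟨⟨φ, p.snd, hφ⟩, hdec, hle, Theory.Imp.refl p.snd⟩ }
  | .inr τ =>
    { carrier := {p | DecidesExists T₂ p.snd τ}
      isCofinal := fun p => by
        obtain ⟨ψ, hψ, hle, hdec⟩ :=
          exists_decidesExists_of_not_separable (fun h => p.not_separable h.symm) τ
        exact ⟨⟨p.fst, ψ, fun h => hψ h.symm⟩, hdec, Theory.Imp.refl p.fst, hle⟩ }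

end InseparablePair

variable {g₁ : L →ᴸ L₁} {g₂ : L →ᴸ L₂} {T₁ : L₁.Theory} {T₂ : L₂.Theory}

open InseparablePair in
theorem exists_generic [Infinite α] [Countable α] [Countable L₁.Symbols] [Countable L₂.Symbols]
    (p : InseparablePair g₁ g₂ T₁ T₂ α) :
    ∃ G : Order.Ideal (InseparablePair g₁ g₂ T₁ T₂ α), p ∈ G ∧
      (∀ τ, ∃ q ∈ G, DecidesExists T₁ q.fst τ) ∧ ∀ τ, ∃ q ∈ G, DecidesExists T₂ q.snd τ := by
  have := Encodable.ofCountable (L₁.Formula (α ⊕ Fin 1) ⊕ L₂.Formula (α ⊕ Fin 1))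
  refine ⟨Order.idealOfCofinals p decisive, Order.mem_idealOfCofinals p decisive,
    fun τ => ?_, fun τ => ?_⟩
  · exact (Order.cofinal_meets_idealOfCofinals p decisive (.inl τ)).imp fun q hq => hq.symm
  · exact (Order.cofinal_meets_idealOfCofinals p decisive (.inr τ)).imp fun q hq => hq.symm

theorem exists_models_of_not_separable [Infinite α] [Countable α] [Countable L₁.Symbols]
    [Countable L₂.Symbols] {φ : L₁.Formula α} {ψ : L₂.Formula α} (h : ¬ Separable g₁ g₂ T₁ T₂ φ ψ) :
    ∃ (M : Type u) (_ : L₁.Structure M) (x : α → M) (N : Type u) (_ : L₂.Structure N) (y : α → N),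
      M ⊨ T₁ ∧ N ⊨ T₂ ∧ Function.Surjective x ∧ Function.Surjective y ∧
      φ.Realize x ∧ ψ.Realize y ∧
      ∀ χ : L.Formula α, (g₁.onFormula χ).Realize x ↔ (g₂.onFormula χ).Realize y := by
  obtain ⟨G, hG, hdec₁, hdec₂⟩ := exists_generic ⟨φ, ψ, h⟩
  have : Nonempty G := ⟨_, hG⟩
  have hdir : Directed (· ≤ ·) ((↑) : G → InseparablePair g₁ g₂ T₁ T₂ α) :=
    directedOn_iff_directed.1 G.directed
  obtain ⟨M, _, x, hM, hx, hxG⟩ := exists_surjective_forall_realize.{u} (T := T₁)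
    (f := fun q : G => q.1.fst) (fun p q => (hdir p q).imp fun _ hr => ⟨hr.1.1, hr.2.1⟩)
    (fun q => q.1.not_fst_imp_bot) fun τ => let ⟨q, hq, hτ⟩ := hdec₁ τ; ⟨⟨q, hq⟩, hτ⟩
  obtain ⟨N, _, y, hN, hy, hyG⟩ := exists_surjective_forall_realize.{u} (T := T₂)
    (f := fun q : G => q.1.snd) (fun p q => (hdir p q).imp fun _ hr => ⟨hr.1.2, hr.2.2⟩)
    (fun q => q.1.not_snd_imp_bot) fun τ => let ⟨q, hq, hτ⟩ := hdec₂ τ; ⟨⟨q, hq⟩, hτ⟩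
  refine ⟨M, _, x, N, _, y, hM, hN, hx, hy, hxG ⟨_, hG⟩, hyG ⟨_, hG⟩, fun χ => ?_⟩
  have hagree (χ : L.Formula α) (hχ : (g₁.onFormula χ).Realize x) :
      (g₂.onFormula χ).Realize y := by
    obtain ⟨q₁, hq₁, hχ₁⟩ := hdec₁ ((g₁.onFormula χ).relabel Sum.inl)
    obtain ⟨q₂, hq₂, hχ₂⟩ := hdec₂ ((g₂.onFormula χ).relabel Sum.inl)
    have : Nonempty M := ⟨x (Classical.arbitrary α)⟩
    have : Nonempty N := ⟨y (Classical.arbitrary α)⟩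
    have h₁ := hχ₁.imp_or_imp_not.resolve_right fun h => realize_of_imp h (hxG ⟨q₁, hq₁⟩) hχ
    refine hχ₂.imp_or_imp_not.elim (fun h => realize_of_imp h (hyG ⟨q₂, hq₂⟩)) fun h₂ => ?_
    obtain ⟨r, -, hr₁, hr₂⟩ := G.directed q₁ hq₁ q₂ hq₂
    exact (r.not_separable ⟨χ, hr₁.1.trans h₁, hr₂.2.trans h₂⟩).elim
  exact ⟨hagree χ, fun hy => by_contra fun hx => hagree χ.not hx hy⟩

theorem separable_of_forall_equiv [Countable α] [Nonempty α] [Countable L₁.Symbols]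
    [Countable L₂.Symbols] {φ : L₁.Formula α} {ψ : L₂.Formula α}
    (h : ∀ (M N : Type u) [L.Structure M] [L.Structure N] [L₁.Structure M] [L₂.Structure N]
      [g₁.IsExpansionOn M] [g₂.IsExpansionOn N] [M ⊨ T₁] [N ⊨ T₂] (e : M ≃[L] N) (x : α → M),
      φ.Realize x → ¬ ψ.Realize (e ∘ x)) :
    Separable g₁ g₂ T₁ T₂ φ ψ := by
  have hinl : Separable g₁ g₂ T₁ T₂ (φ.relabel (Sum.inl : α → α ⊕ ℕ)) (ψ.relabel Sum.inl) := by
    by_contra hsep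
    obtain ⟨M, _, x, N, _, y, _, _, hx, hy, hφ, hψ, hL⟩ := exists_models_of_not_separable.{u} hsep
    let := g₁.reduct M
    let := g₂.reduct N
    have := g₁.isExpansionOn_reduct M
    have := g₂.isExpansionOn_reduct N
    simp only [LHom.realize_onFormula] at hL
    obtain ⟨e, rfl⟩ := exists_equiv_of_realize_iff hx hy hL
    rw [Formula.realize_relabel] at hφ hψ
    exact h M N e _ hφ hψ
  let r : α ⊕ ℕ → α := Sum.elim id fun _ => Classical.arbitrary α
  exact (hinl.relabel r).mono (imp_relabel_relabel rfl) (imp_relabel_relabel rfl)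

/-- Over `γ`, the relation defined by `ρ` is invariant under all isomorphisms of `L`-reducts, so
`γ ⊓ ρ` and `γ ⊓ ∼ρ` have an interpolant in `L`. -/
theorem exists_realize_iff_of_forall_equiv [Countable α] [Nonempty α] [Countable L₁.Symbols]
    {γ ρ : L₁.Formula α}
    (h : ∀ (M N : Type u) [L.Structure M] [L.Structure N] [L₁.Structure M] [L₁.Structure N]
      [g₁.IsExpansionOn M] [g₁.IsExpansionOn N] [M ⊨ T₁] [N ⊨ T₁] (e : M ≃[L] N) (x : α → M),
      γ.Realize x → γ.Realize (e ∘ x) → ρ.Realize x → ρ.Realize (e ∘ x)) :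
    ∃ χ : L.Formula α, ∀ (M : Type u) [L.Structure M] [L₁.Structure M] [g₁.IsExpansionOn M]
      [M ⊨ T₁] [Nonempty M] (x : α → M), γ.Realize x → (ρ.Realize x ↔ χ.Realize x) := by
  obtain ⟨χ, hχ, hχ'⟩ : Separable g₁ g₁ T₁ T₁ (γ ⊓ ρ) (γ ⊓ ρ.not) := by
    refine separable_of_forall_equiv.{u} fun M N _ _ _ _ _ _ _ _ e x hx hy => ?_
    rw [Formula.realize_inf] at hx hy
    exact hy.2 (h M N e x hx.1 hy.1 hx.2)
  refine ⟨χ, fun M _ _ _ _ _ x hγ => ⟨fun hρ => ?_, fun hχx => ?_⟩⟩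
  · exact (g₁.realize_onFormula χ).1 (realize_of_imp hχ (Formula.realize_inf.2 ⟨hγ, hρ⟩))
  · by_contra hρ
    exact realize_of_imp hχ' (Formula.realize_inf.2 ⟨hγ, hρ⟩) ((g₁.realize_onFormula χ).2 hχx)

end Interpolation

section RelationFormulas

variable {L : FirstOrder.Language.{v, w}} {L' : FirstOrder.Language.{v₁, w₁}} (g : L →ᴸ L')
  {α : Type} {β : Type*} {M : Type*} [L'.Structure M]

/-- The binary relation that `ρ` defines from the parameters `e`. -/
def definedRel (ρ : L'.Formula (α ⊕ Fin 2)) (e : α → M) (a b : M) : Prop :=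
  ρ.Realize (Sum.elim e ![a, b])

theorem realize_iff_definedRel {ρ : L'.Formula (α ⊕ Fin 2)} {x : α ⊕ Fin 2 → M} :
    ρ.Realize x ↔ definedRel ρ (x ∘ Sum.inl) (x (.inr 0)) (x (.inr 1)) := by
  refine iff_of_eq (congrArg ρ.Realize (funext fun i => ?_))
  rcases i with a | i
  · rfl
  · fin_cases i <;> rfl

/-- The formula `s ρ t`, with the parameters of `ρ` renamed by `ν`. -/
def relFormula (ρ : L'.Formula (α ⊕ Fin 2)) (ν : α → β) (s t : L'.Term β) : L'.Formula β :=
  ρ.subst (Sum.elim (.var ∘ ν) ![s, t])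

theorem realize_relFormula {ρ : L'.Formula (α ⊕ Fin 2)} {ν : α → β} {s t : L'.Term β}
    {v : β → M} :
    (relFormula ρ ν s t).Realize v ↔ definedRel ρ (v ∘ ν) (s.realize v) (t.realize v) := by
  rw [relFormula, Formula.Realize, BoundedFormula.realize_subst]
  exact realize_iff_definedRel

/-- The formula stating that the relation defined by `ρ` is an equivalence relation. -/
noncomputable def equivalenceFormula (ρ : L'.Formula (α ⊕ Fin 2)) : L'.Formula α :=
  let r (i j : Fin 3) := relFormula ρ Sum.inl (.var (.inr i)) (.var (.inr j))
  Formula.iAlls (Fin 3) (r 0 0 ⊓ ((r 0 1).imp (r 1 0) ⊓ (r 0 1).imp ((r 1 2).imp (r 0 2))))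

theorem realize_equivalenceFormula {ρ : L'.Formula (α ⊕ Fin 2)} {e : α → M} :
    (equivalenceFormula ρ).Realize e ↔ Equivalence (definedRel ρ e) := by
  simp only [equivalenceFormula, Formula.realize_iAlls, Formula.realize_inf, Formula.realize_imp,
    realize_relFormula, Sum.elim_comp_inl, Term.realize_var, Sum.elim_inr]
  constructor
  · intro h
    exact ⟨fun a => (h ![a, a, a]).1, fun {a b} => (h ![a, b, a]).2.1,
      fun {a b c} => (h ![a, b, c]).2.2⟩
  · intro h v
    exact ⟨h.refl _, h.symm, h.trans⟩

/-- The formula stating that the relation defined by `ρ` is compatible with the operations of the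
sublanguage `L`. -/
noncomputable def compatFormula [Finite (Σ n, L.Functions n)] (ρ : L'.Formula (α ⊕ Fin 2)) :
    L'.Formula α :=
  Formula.iInf fun F : Σ n, L.Functions n => Formula.iAlls (Fin F.1 ⊕ Fin F.1)
    ((Formula.iInf fun i => relFormula ρ Sum.inl (.var (.inr (.inl i))) (.var (.inr (.inr i)))).imp
      (relFormula ρ Sum.inl (.func (g.onFunction F.2) fun i => .var (.inr (.inl i)))
        (.func (g.onFunction F.2) fun i => .var (.inr (.inr i)))))

theorem realize_compatFormula [Finite (Σ n, L.Functions n)] [L.Structure M] [g.IsExpansionOn M]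
    {ρ : L'.Formula (α ⊕ Fin 2)} {e : α → M} :
    (compatFormula g ρ).Realize e ↔ ∀ {n} (f : L.Functions n) (x y : Fin n → M),
      (∀ i, definedRel ρ e (x i) (y i)) →
        definedRel ρ e (Structure.funMap f x) (Structure.funMap f y) := by
  simp only [compatFormula, Formula.realize_iInf, Formula.realize_iAlls, Formula.realize_imp,
    realize_relFormula, Sum.elim_comp_inl, Term.realize_var, Sum.elim_inr, Term.realize_func,
    LHom.map_onFunction]
  exact ⟨fun h n f x y => h ⟨n, f⟩ (Sum.elim x y), fun h F v => h F.2 (v ∘ .inl) (v ∘ .inr)⟩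

/-- The formula stating that the relations defined by `ρ` and `ρ'` meet in the equality and compose
to the full relation. -/
noncomputable def complementaryFormula (ρ ρ' : L'.Formula (α ⊕ Fin 2)) : L'.Formula α :=
  Formula.iAlls (Fin 2)
    ((relFormula ρ Sum.inl (.var (.inr 0)) (.var (.inr 1))).imp
      ((relFormula ρ' Sum.inl (.var (.inr 0)) (.var (.inr 1))).imp
        (Term.equal (.var (.inr 0)) (.var (.inr 1)))) ⊓
    Formula.iExs (Fin 1)
      (relFormula ρ (.inl ∘ .inl) (.var (.inl (.inr 0))) (.var (.inr 0)) ⊓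
        relFormula ρ' (.inl ∘ .inl) (.var (.inr 0)) (.var (.inl (.inr 1)))))

theorem realize_complementaryFormula {ρ ρ' : L'.Formula (α ⊕ Fin 2)} {e : α → M} :
    (complementaryFormula ρ ρ').Realize e ↔
      (∀ a b, definedRel ρ e a b → definedRel ρ' e a b → a = b) ∧
        ∀ a b, ∃ c, definedRel ρ e a c ∧ definedRel ρ' e c b := by
  simp only [complementaryFormula, Formula.realize_iAlls, Formula.realize_inf,
    Formula.realize_imp, Formula.realize_iExs, Formula.realize_equal, realize_relFormula,
    ← Function.comp_assoc, Sum.elim_comp_inl, Term.realize_var, Sum.elim_inr, Sum.elim_inl,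
    forall_and]
  refine and_congr ⟨fun h a b => h ![a, b], fun h v => h _ _⟩ ⟨fun h a b => ?_, fun h v => ?_⟩
  · exact (h ![a, b]).imp' (fun v : Fin 1 → M => v 0) fun _ => id
  · exact (h (v 0) (v 1)).imp' (fun c _ => c) fun _ => id

/-- A closed term, as a term in the variables `α`. -/
def closedTerm (t : L'.Term Empty) : L'.Term α := t.relabel Empty.elim

theorem interp_onTerm {A : Type u} [L.Structure A] [L'.Structure A] [g.IsExpansionOn A]
    (t : L.Term Empty) : interp A (g.onTerm t) = interp A t :=
  g.realize_onTerm t _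

theorem realize_closedTerm {A : Type u} [L'.Structure A] {t : L'.Term Empty} {e : α → A} :
    (closedTerm t).realize e = interp A t := by
  rw [closedTerm, Term.realize_relabel, interp, Subsingleton.elim (e ∘ Empty.elim) Empty.elim]

/-- The formula stating `0⃗ ρ e⃗ ρ' 1⃗`, where the constants are terms of the sublanguage `L`. -/
noncomputable def betweenFormula {l : ℕ} (z o : Fin l → L.Term Empty)
    (ρ ρ' : L'.Formula (Fin l ⊕ Fin 2)) : L'.Formula (Fin l) :=
  (Formula.iInf fun i => relFormula ρ id (closedTerm (g.onTerm (z i))) (.var i)) ⊓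
    Formula.iInf fun i => relFormula ρ' id (.var i) (closedTerm (g.onTerm (o i)))

theorem realize_betweenFormula {A : Type u} [L.Structure A] [L'.Structure A] [g.IsExpansionOn A]
    {l : ℕ} {z o : Fin l → L.Term Empty} {ρ ρ' : L'.Formula (Fin l ⊕ Fin 2)} {e : Fin l → A} :
    (betweenFormula g z o ρ ρ').Realize e ↔
      (∀ i, definedRel ρ e (interp A (z i)) (e i)) ∧
        ∀ i, definedRel ρ' e (e i) (interp A (o i)) := by
  simp only [betweenFormula, Formula.realize_inf, Formula.realize_iInf, realize_relFormula,
    Function.comp_id, realize_closedTerm, interp_onTerm, Term.realize_var]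

end RelationFormulas

section FactorPair

variable {L : FirstOrder.Language.{v, w}} {A B : Type u} [L.Structure A] [L.Structure B] {l : ℕ}

/-- The inverse image of a congruence under a homomorphism. -/
def Congruence.comap (f : A →[L] B) (θ : Congruence L B) : Congruence L A where
  rel a b := θ.rel (f a) (f b)
  refl a := θ.refl (f a)
  symm h := θ.symm h
  trans h h' := θ.trans h h'
  compat F x y h := by
    rw [f.map_fun, f.map_fun]
    exact θ.compat F (f ∘ x) (f ∘ y) h

theorem map_interp {F : Type*} [FunLike F A B] [L.HomClass F A B] (f : F) (t : L.Term Empty) :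
    f (interp A t) = interp B t := by
  rw [interp, interp, ← HomClass.realize_term f, Subsingleton.elim (f ∘ Empty.elim) Empty.elim]

/-- The relations `r true` and `r false` are complementary factor congruences `θ` and `θ*` with
`0⃗ θ e⃗ θ* 1⃗`. Arbitrary relations are allowed so that first-order formulas can define them. -/
def IsFactorPair (z o : Fin l → L.Term Empty) (r : Bool → A → A → Prop) (e : Fin l → A) : Prop :=
  ∃ θ : Bool → Congruence L A, (∀ b, (θ b).rel = r b) ∧
    Complementary (θ true) (θ false) ∧ Between z o (θ true) (θ false) e

theorem exists_congruence_rel_eq_iff {r : A → A → Prop} :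
    (∃ θ : Congruence L A, θ.rel = r) ↔ Equivalence r ∧
      ∀ {n} (f : L.Functions n) (x y : Fin n → A), (∀ i, r (x i) (y i)) →
        r (Structure.funMap f x) (Structure.funMap f y) := by
  constructor
  · rintro ⟨θ, rfl⟩
    exact ⟨⟨θ.refl, θ.symm, θ.trans⟩, θ.compat⟩
  · rintro ⟨h, hcompat⟩
    exact ⟨⟨r, h.refl, h.symm, h.trans, hcompat⟩, rfl⟩

variable {z o : Fin l → L.Term Empty} {r : Bool → A → A → Prop} {e : Fin l → A}

theorem isFactorPair_iff : IsFactorPair z o r e ↔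
    (∀ b, ∃ θ : Congruence L A, θ.rel = r b) ∧
    ((∀ a b, r true a b → r false a b → a = b) ∧ ∀ a b, ∃ c, r true a c ∧ r false c b) ∧
    (∀ i, r true (interp A (z i)) (e i)) ∧ ∀ i, r false (e i) (interp A (o i)) := by
  constructor
  · rintro ⟨θ, hθ, hcompl, hbetw⟩
    rw [← hθ, ← hθ]
    exact ⟨fun b => ⟨θ b, hθ b⟩, hcompl, hbetw⟩
  · rintro ⟨hr, hcompl, hbetw⟩
    choose θ hθ using hr
    rw [← hθ, ← hθ] at hcompl hbetw
    exact ⟨θ, hθ, hcompl, hbetw⟩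

theorem IsFactorPair.comap {r : Bool → B → B → Prop} (f : A ≃[L] B)
    (h : IsFactorPair z o r (f ∘ e)) : IsFactorPair z o (fun b x y => r b (f x) (f y)) e := by
  obtain ⟨θ, hθ, ⟨hinf, hcomp⟩, hz, ho⟩ := h
  simp only [← map_interp f] at hz ho
  refine ⟨fun b => (θ b).comap f.toHom, fun b => congrArg (fun s x y => s (f x) (f y)) (hθ b),
    ⟨fun a b h h' => f.injective (hinf _ _ h h'), fun a b => ?_⟩, hz, ho⟩
  obtain ⟨c, hc⟩ := hcomp (f a) (f b)
  refine ⟨f.symm c, ?_⟩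
  simpa only [Congruence.comap, Equiv.coe_toHom, f.apply_symm_apply] using hc

variable {T : L.Theory}

theorem IsFactorPair.eq (hDet : HasDeterminingProperty.{u} z o T) (hA : A ⊨ T) [Nonempty A]
    {r' : Bool → A → A → Prop} (h : IsFactorPair z o r e) (h' : IsFactorPair z o r' e) :
    r = r' := by
  obtain ⟨θ, hθ, hcompl, hbetw⟩ := h
  obtain ⟨θ', hθ', hcompl', hbetw'⟩ := h'
  obtain ⟨-, hcentral, hpair⟩ := hDet A hA inferInstance
  have heq : (θ true, θ false) = (θ' true, θ' false) :=
    (hpair e (hcentral _ _ e hcompl hbetw)).unique ⟨hcompl, hbetw⟩ ⟨hcompl', hbetw'⟩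
  obtain ⟨htrue, hfalse⟩ := Prod.ext_iff.1 heq
  funext b
  rw [← hθ, ← hθ']
  cases b
  · exact congrArg Congruence.rel hfalse
  · exact congrArg Congruence.rel htrue

theorem isCentral_iff_exists_isFactorPair (hDet : HasDeterminingProperty.{u} z o T) (hA : A ⊨ T)
    [Nonempty A] : IsCentral z o e ↔ ∃ r, IsFactorPair z o r e := by
  obtain ⟨-, hcentral, hpair⟩ := hDet A hA inferInstance
  constructor
  · intro he
    obtain ⟨⟨θ, θ'⟩, hθ, -⟩ := hpair e he
    let Θ (b : Bool) : Congruence L A := if b then θ else θ'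
    exact ⟨fun b => (Θ b).rel, Θ, fun _ => rfl, hθ⟩
  · rintro ⟨r, θ, -, hcompl, hbetw⟩
    exact hcentral _ _ e hcompl hbetw

/-- The formula stating that the relations defined by `ρ` form a factor pair, in the sense of
`IsFactorPair`, for the algebra of the sublanguage `L`. -/
noncomputable def factorPairFormula [Finite (Σ n, L.Functions n)]
    {L' : FirstOrder.Language.{v₁, w₁}} (g : L →ᴸ L') (z o : Fin l → L.Term Empty)
    (ρ : Bool → L'.Formula (Fin l ⊕ Fin 2)) : L'.Formula (Fin l) :=
  (Formula.iInf fun b => equivalenceFormula (ρ b) ⊓ compatFormula g (ρ b)) ⊓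
    (complementaryFormula (ρ true) (ρ false) ⊓ betweenFormula g z o (ρ true) (ρ false))

theorem realize_factorPairFormula [Finite (Σ n, L.Functions n)]
    {L' : FirstOrder.Language.{v₁, w₁}} {g : L →ᴸ L'} [L'.Structure A] [g.IsExpansionOn A]
    {ρ : Bool → L'.Formula (Fin l ⊕ Fin 2)} :
    (factorPairFormula g z o ρ).Realize e ↔
      IsFactorPair z o (fun b => definedRel (ρ b) e) e := by
  simp only [factorPairFormula, Formula.realize_inf, Formula.realize_iInf,
    realize_equivalenceFormula, realize_compatFormula, realize_complementaryFormula,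
    realize_betweenFormula, isFactorPair_iff, exists_congruence_rel_eq_iff]

end FactorPair

section PairLanguage

/-- The relation symbols of `pairLanguage`: one binary symbol for each `b : Bool`. -/
inductive PairSymbol : ℕ → Type
  | rel (b : Bool) : PairSymbol 2

/-- The language of two binary relations, naming a pair of congruences. -/
def pairLanguage : FirstOrder.Language.{0, 0} := ⟨fun _ => Empty, PairSymbol⟩

/-- The `pairLanguage`-structure given by a pair of binary relations. -/
abbrev pairStructure {A : Type*} (r : Bool → A → A → Prop) : pairLanguage.Structure A where
  funMap f := f.elim
  RelMap | .rel b, x => r b (x 0) (x 1)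

instance : Countable pairLanguage.Symbols := by
  refine Function.Surjective.countable (f := fun b : Bool => Sum.inr ⟨2, PairSymbol.rel b⟩) ?_
  rintro (⟨-, ⟨⟩⟩ | ⟨-, ⟨b⟩⟩)
  exact ⟨b, rfl⟩

theorem countable_symbols_sum (L : FirstOrder.Language.{v, w}) (L' : FirstOrder.Language.{v₁, w₁})
    [Countable L.Symbols] [Countable L'.Symbols] : Countable (L.sum L').Symbols := by
  rw [← Cardinal.mk_le_aleph0_iff]
  refine (card_sum (L := L) (L' := L')).trans_le (Cardinal.add_le_aleph0.2 ⟨?_, ?_⟩) <;>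
    exact Cardinal.lift_le_aleph0.2 Cardinal.mk_le_aleph0

/-- The `b`-th relation symbol added to `L`. -/
def pairRel (L : FirstOrder.Language.{v, w}) (b : Bool) : (L.sum pairLanguage).Relations 2 :=
  Sum.inr (PairSymbol.rel b)

/-- The formula `x₀ R x₁`, where `R` is the `b`-th relation symbol added to `L`. -/
def pairFormula (L : FirstOrder.Language.{v, w}) (α : Type) (b : Bool) :
    (L.sum pairLanguage).Formula (α ⊕ Fin 2) :=
  (pairRel L b).formula₂ (.var (.inr 0)) (.var (.inr 1))

theorem definedRel_pairFormula {L : FirstOrder.Language.{v, w}} {A : Type*} [L.Structure A]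
    (r : Bool → A → A → Prop) {α : Type} (e : α → A) (b : Bool) :
    let := pairStructure r
    definedRel (pairFormula L α b) e = r b := by
  intro _
  funext x y
  rw [definedRel, pairFormula, Formula.realize_rel₂]
  rfl

end PairLanguage

section Definability

variable {L : FirstOrder.Language.{v, w}} [Finite (Σ n, L.Functions n)] [Countable L.Symbols]
  {T : L.Theory} {l : ℕ} {z o : Fin l → L.Term Empty}

/-- By the Determining Property, an isomorphism that fixes `e⃗` carries the factor pair of `e⃗` to
itself, so Beth's theorem applies to each of its two relations. -/
theorem exists_definedRel_eq_of_isFactorPair (hDet : HasDeterminingProperty.{u} z o T) :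
    ∃ χ : Bool → L.Formula (Fin l ⊕ Fin 2), ∀ (A : Type u) [L.Structure A], A ⊨ T → Nonempty A →
      ∀ (r : Bool → A → A → Prop) (e : Fin l → A), IsFactorPair z o r e →
        ∀ b, definedRel (χ b) e = r b := by
  let g : L →ᴸ L.sum pairLanguage := LHom.sumInl
  let γ := (factorPairFormula g z o (pairFormula L (Fin l))).relabel
    (Sum.inl : Fin l → Fin l ⊕ Fin 2)
  have := countable_symbols_sum L pairLanguage
  have hBeth (b : Bool) := exists_realize_iff_of_forall_equiv.{u} (g₁ := g) (T₁ := g.onTheory T)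
    (γ := γ) (ρ := pairFormula L (Fin l) b) fun M N _ _ _ _ _ _ _ _ f x hγ hγ' hx => by
      have hM : M ⊨ T := (LHom.onTheory_model g T).1 inferInstance
      have : Nonempty M := ⟨x (.inr 0)⟩
      rw [Formula.realize_relabel, realize_factorPairFormula] at hγ hγ'
      have heq := congrFun (hγ.eq hDet hM (hγ'.comap f)) b
      rw [realize_iff_definedRel] at hx ⊢
      rwa [heq] at hx
  choose χ hχ using hBeth
  refine ⟨χ, fun A _ hA _ r e hr b => ?_⟩
  let := pairStructure r
  have := (LHom.onTheory_model g T).2 hA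
  funext x y
  refine propext ((hχ b A (Sum.elim e ![x, y]) ?_).symm.trans ?_)
  · rw [Formula.realize_relabel, Sum.elim_comp_inl, realize_factorPairFormula]
    simpa only [definedRel_pairFormula] using hr
  · exact iff_of_eq (congrFun₂ (definedRel_pairFormula r e b) x y)

theorem exists_realize_iff_isCentral (hDet : HasDeterminingProperty.{u} z o T) :
    ∃ κ : L.Formula (Fin l), ∀ (A : Type u) [L.Structure A], A ⊨ T → Nonempty A →
      ∀ e : Fin l → A, κ.Realize e ↔ IsCentral z o e := by
  obtain ⟨χ, hχ⟩ := exists_definedRel_eq_of_isFactorPair hDet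
  refine ⟨factorPairFormula (LHom.id L) z o χ, fun A _ hA hne e => ?_⟩
  rw [realize_factorPairFormula, isCentral_iff_exists_isFactorPair hDet hA]
  refine ⟨fun h => ⟨_, h⟩, fun ⟨r, hr⟩ => ?_⟩
  rwa [funext (hχ A hA hne r e hr)]

end Definability

section DirectProducts

variable {L : FirstOrder.Language.{v, w}} {A B C : Type u} [L.Structure A] [L.Structure B]
  [L.Structure C] {T : L.Theory} {l : ℕ} {z o : Fin l → L.Term Empty}

/-- The projection of `A × B` onto `A`, as a homomorphism. -/
def fstHom (A B : Type u) [L.Structure A] [L.Structure B] : A × B →[L] A where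
  toFun := Prod.fst
  map_fun' _ _ := rfl
  map_rel' _ _ h := h.1

/-- The projection of `A × B` onto `B`, as a homomorphism. -/
def sndHom (A B : Type u) [L.Structure A] [L.Structure B] : A × B →[L] B where
  toFun := Prod.snd
  map_fun' _ _ := rfl
  map_rel' _ _ h := h.2

theorem interp_prod (t : L.Term Empty) : interp (A × B) t = (interp A t, interp B t) :=
  Prod.ext (map_interp (fstHom A B) t) (map_interp (sndHom A B) t)

theorem map_interp_prod (f : A ≃[L] B × C) (t : L.Term Empty) :
    f (interp A t) = (interp B t, interp C t) :=
  (map_interp f t).trans (interp_prod t)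

theorem IsEquational.model_of_surjective (hT : IsEquational T) (f : A →[L] B)
    (hf : Function.Surjective f) (hA : A ⊨ T) : B ⊨ T := by
  refine ⟨fun φ hφ => ?_⟩
  have hφA := hA.realize_of_mem φ hφ
  obtain ⟨n, t₁, t₂, rfl⟩ := hT φ hφ
  rw [Sentence.Realize, BoundedFormula.realize_alls] at hφA ⊢
  intro y
  obtain ⟨x, rfl⟩ := hf.comp_left y
  have hterm (t : L.Term (Empty ⊕ Fin n)) : t.realize (Sum.elim default (f ∘ x)) =
      f (t.realize (Sum.elim default x)) := by
    rw [← HomClass.realize_term f, Sum.comp_elim, Subsingleton.elim (f ∘ default) default]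
  rw [BoundedFormula.realize_bdEqual, hterm, hterm]
  exact congrArg f ((BoundedFormula.realize_bdEqual _ _).1 (hφA x))

theorem IsEquational.model_of_prod [Nonempty A] [Nonempty B] (hT : IsEquational T)
    (h : (A × B) ⊨ T) : A ⊨ T ∧ B ⊨ T :=
  ⟨hT.model_of_surjective (fstHom A B) Prod.fst_surjective h,
    hT.model_of_surjective (sndHom A B) Prod.snd_surjective h⟩

theorem DirectlyIndecomposable.eq_or_eq_of_isCentral (hA : DirectlyIndecomposable L A)
    {e : Fin l → A} (he : IsCentral z o e) :
    (∀ i, e i = interp A (z i)) ∨ ∀ i, e i = interp A (o i) := by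
  obtain ⟨B, C, _, _, f, hf⟩ := he
  rcases subsingleton_or_nontrivial B with _ | hB
  · exact .inr fun i => f.injective <| by
      rw [hf, map_interp_prod, Subsingleton.elim (interp B (z i))]
  · have : Subsingleton C := not_nontrivial_iff_subsingleton.1 fun hC =>
      hA.2 ⟨B, C, _, _, hB, hC, ⟨f⟩⟩
    exact .inl fun i => f.injective <| by
      rw [hf, map_interp_prod, Subsingleton.elim (interp C (o i))]

theorem directlyIndecomposable_iff_forall_isCentral (hT : IsEquational T)
    (h01 : HasZeroOne.{u} T z o) (hA : A ⊨ T) :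
    DirectlyIndecomposable L A ↔ Nontrivial A ∧ ∀ e, IsCentral z o e →
      (∀ i, e i = interp A (z i)) ∨ ∀ i, e i = interp A (o i) := by
  refine ⟨fun h => ⟨h.1, fun e => h.eq_or_eq_of_isCentral⟩, fun ⟨hnontriv, h⟩ => ⟨hnontriv, ?_⟩⟩
  rintro ⟨B, C, _, _, hB, hC, ⟨f⟩⟩
  obtain ⟨hBT, hCT⟩ := hT.model_of_prod (StrongHomClass.theory_model f)
  let e (i : Fin l) : A := f.symm (interp B (z i), interp C (o i))
  have he (i : Fin l) : f (e i) = (interp B (z i), interp C (o i)) := f.apply_symm_apply _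
  rcases h e ⟨B, C, _, _, f, he⟩ with hez | heo
  · have hC01 (i : Fin l) : interp C (z i) = interp C (o i) := by
      have := he i
      rw [hez, map_interp_prod] at this
      exact (Prod.ext_iff.1 this).2
    obtain ⟨x, y, hxy⟩ := hC
    exact hxy (h01 C hCT ⟨x⟩ hC01 x y)
  · have hB01 (i : Fin l) : interp B (z i) = interp B (o i) := by
      have := he i
      rw [heo, map_interp_prod] at this
      exact (Prod.ext_iff.1 this).1.symm
    obtain ⟨x, y, hxy⟩ := hB
    exact hxy (h01 B hBT ⟨x⟩ hB01 x y)

end DirectProducts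

section Axioms

variable {L : FirstOrder.Language.{v, w}} {A : Type u} [L.Structure A] {l : ℕ}

/-- The formula `e⃗ = t⃗`. -/
noncomputable def eqClosedFormula (t : Fin l → L.Term Empty) : L.Formula (Fin l) :=
  Formula.iInf fun i => Term.equal (.var i) (closedTerm (t i))

theorem realize_eqClosedFormula {t : Fin l → L.Term Empty} {e : Fin l → A} :
    (eqClosedFormula t).Realize e ↔ ∀ i, e i = interp A (t i) := by
  simp only [eqClosedFormula, Formula.realize_iInf, Formula.realize_equal, Term.realize_var,
    realize_closedTerm]

/-- The sentence stating that `0⃗` and `1⃗` are the only solutions of `κ`. -/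
noncomputable def trivialCenterSentence (κ : L.Formula (Fin l)) (z o : Fin l → L.Term Empty) :
    L.Sentence :=
  Formula.iAlls (Fin l) ((κ.imp (eqClosedFormula z ⊔ eqClosedFormula o)).relabel Sum.inr)

theorem realize_trivialCenterSentence {κ : L.Formula (Fin l)} {z o : Fin l → L.Term Empty} :
    A ⊨ trivialCenterSentence κ z o ↔ ∀ e : Fin l → A, κ.Realize e →
      (∀ i, e i = interp A (z i)) ∨ ∀ i, e i = interp A (o i) := by
  simp only [trivialCenterSentence, Sentence.Realize, Formula.realize_iAlls,
    Formula.realize_relabel, Formula.realize_imp, Formula.realize_sup, realize_eqClosedFormula,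
    Function.comp_def, Sum.elim_inr]

theorem realize_cardGe_two : A ⊨ Sentence.cardGe L 2 ↔ Nontrivial A := by
  rw [Sentence.realize_cardGe, Nat.cast_two, Cardinal.two_le_iff_one_lt,
    Cardinal.one_lt_iff_nontrivial]

end Axioms

end Paper

theorem directlyIndecomposables_axiomatizable_general {L : FirstOrder.Language.{v, w}}
    [Finite (Σ n, L.Functions n)] [Countable L.Symbols] {T : L.Theory}
    (hT : Paper.IsEquational T) {l : ℕ} {z o : Fin l → L.Term Empty}
    (h01 : Paper.HasZeroOne.{u} T z o) (hDet : Paper.HasDeterminingProperty.{u} z o T) :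
    ∃ S : L.Theory,
      ∀ (A : Type u) [L.Structure A], Nonempty A →
        ((A ⊨ T ∧ Paper.DirectlyIndecomposable L A) ↔ A ⊨ S) := by
  obtain ⟨κ, hκ⟩ := Paper.exists_realize_iff_isCentral.{u} hDet
  refine ⟨T ∪ {Sentence.cardGe L 2, Paper.trivialCenterSentence κ z o}, fun A _ hne => ?_⟩
  rw [Theory.model_union_iff, Set.insert_eq, Theory.model_union_iff, Theory.model_singleton_iff,
    Theory.model_singleton_iff, Paper.realize_cardGe_two, Paper.realize_trivialCenterSentence]
  refine and_congr_right fun hA => ?_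
  simp only [Paper.directlyIndecomposable_iff_forall_isCentral hT h01 hA, hκ A hA hne]

/-- **Corollary 4.3.** If `V` is a variety over a finite language with `0⃗` & `1⃗`
having the Determining Property, then the class `V_DI` of directly indecomposable
members of `V` is axiomatizable by a set of first-order sentences. -/
theorem directlyIndecomposables_axiomatizable {L : FirstOrder.Language.{v, w}}
    (hfin : Finite L.Symbols)
    (T : L.Theory) (hT : Paper.IsEquational T) {l : ℕ} (z o : Fin l → L.Term Empty)
    (h01 : Paper.HasZeroOne.{u} T z o)
    (hDet : Paper.HasDeterminingProperty.{u} z o T) :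
    ∃ S : L.Theory,
      ∀ (A : Type u) [L.Structure A], Nonempty A →
        ((A ⊨ T ∧ Paper.DirectlyIndecomposable L A) ↔ A ⊨ S) := by
  have : Finite (Σ n, L.Functions n) := .of_injective (β := L.Symbols) Sum.inl Sum.inl_injective
  exact directlyIndecomposables_axiomatizable_general hT h01 hDet
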